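/- Let m ≥ 2 be an even integer and define θ_{A_m}(τ, z₁,…,z_m) := θ(τ,z₁)·…·θ(τ,z_m)·θ(τ, z₁+⋯+z_m) on ℍ × ℂᵐ. Then θ_{A_m} is a holomorphic Jacobi form of weight (m+1)/2 and index 1 for the lattice A_m (realized as ℤᵐ with Gram matrix S = I_m + J_m, where J_m is the all-ones m×m matrix) with multiplier system v_η^{3m+3}. It is a Jacobi cusp form of critical weight: writing its Fourier expansion as θ_{A_m}(τ,z) = Σ c(n,r)·exp(2πi(nτ + r₁z₁ + ⋯ + r_mz_m)) over n ∈ ℚ, n ≥ 0 and r ∈ (1/2)ℤᵐ, one has min{2n − rᵀ(I_m+J_m)^{−1}r : c(n,r) ≠ 0} = 1/(4(m+1)) > 0. -/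

import Mathlib

open Complex Matrix
open scoped Real BigOperators Classical

noncomputable section

abbrev SL2Z := Matrix.SpecialLinearGroup (Fin 2) ℤ

/-- The integral bilinear form attached to a Gram matrix `S`. -/
def bilinZ {ι : Type*} [Fintype ι] (S : Matrix ι ι ℤ) (x y : ι → ℤ) : ℤ :=
  ∑ i, ∑ j, x i * S i j * y j

def bilinQ {ι : Type*} [Fintype ι] (S : Matrix ι ι ℤ) (x y : ι → ℚ) : ℚ :=
  ∑ i, ∑ j, x i * (S i j : ℚ) * y j

def bilinR {ι : Type*} [Fintype ι] (S : Matrix ι ι ℤ) (x y : ι → ℝ) : ℝ :=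
  ∑ i, ∑ j, x i * (S i j : ℝ) * y j

def bilinC {ι : Type*} [Fintype ι] (S : Matrix ι ι ℤ) (x y : ι → ℂ) : ℂ :=
  ∑ i, ∑ j, x i * (S i j : ℂ) * y j

/-- `S` is the Gram matrix of an even positive definite lattice. -/
structure IsEvenPosDef {ι : Type*} [Fintype ι] (S : Matrix ι ι ℤ) : Prop where
  symm : S.IsSymm
  posdef : ∀ x : ι → ℚ, x ≠ 0 → 0 < bilinQ S x x
  even_diag : ∀ i, (2 : ℤ) ∣ S i i

/-- `l ∈ (1/2) L^∨`, written in lattice coordinates:  `2(l,x) ∈ ℤ` for every lattice vector. -/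
def InHalfDual {ι : Type*} [Fintype ι] (S : Matrix ι ι ℤ) (l : ι → ℚ) : Prop :=
  ∀ x : ι → ℤ, ∃ m : ℤ, 2 * bilinQ S l (fun i => (x i : ℚ)) = m

/-- `φ` is a holomorphic Jacobi form of weight `k` and index `t` for the lattice `(ℤ^ι, S)`
with `SL₂(ℤ)`-character (multiplier system) `χ`, Heisenberg character `ν`,
and Fourier coefficients `f`. -/
structure IsJacobiForm {ι : Type*} [Fintype ι] (S : Matrix ι ι ℤ) (k t : ℚ)
    (χ : SL2Z → ℂ) (ν : (ι → ℤ) → (ι → ℤ) → ℂ)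
    (f : ℚ × (ι → ℚ) → ℂ) (φ : ℂ → (ι → ℂ) → ℂ) : Prop where
  holo : DifferentiableOn ℂ (fun p : ℂ × (ι → ℂ) => φ p.1 p.2) {p | 0 < p.1.im}
  modular : ∀ A : SL2Z, ∀ τ : ℂ, 0 < τ.im → ∀ z : ι → ℂ,
    φ (((A.1 0 0 : ℂ) * τ + (A.1 0 1 : ℂ)) / ((A.1 1 0 : ℂ) * τ + (A.1 1 1 : ℂ)))
        (fun i => z i / ((A.1 1 0 : ℂ) * τ + (A.1 1 1 : ℂ)))
      = χ A * ((A.1 1 0 : ℂ) * τ + (A.1 1 1 : ℂ)) ^ (k : ℂ)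
        * Complex.exp ((π : ℂ) * I * (t : ℂ) * (A.1 1 0 : ℂ) * bilinC S z z
            / ((A.1 1 0 : ℂ) * τ + (A.1 1 1 : ℂ)))
        * φ τ z
  elliptic : ∀ x y : ι → ℤ, ∀ τ : ℂ, 0 < τ.im → ∀ z : ι → ℂ,
    φ τ (fun i => z i + (x i : ℂ) * τ + (y i : ℂ))
      = ν x y * Complex.exp (-((π : ℂ) * I * (t : ℂ))
            * ((bilinZ S x x : ℂ) * τ + 2 * bilinC S (fun i => (x i : ℂ)) z))
        * φ τ z
  support : ∀ p : ℚ × (ι → ℚ), f p ≠ 0 →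
    0 ≤ p.1 ∧ InHalfDual S p.2 ∧ 0 ≤ 2 * p.1 * t - bilinQ S p.2 p.2
  expansion : ∀ τ : ℂ, 0 < τ.im → ∀ z : ι → ℂ,
    HasSum (fun p : ℚ × (ι → ℚ) =>
        f p * Complex.exp (2 * (π : ℂ) * I *
          ((p.1 : ℂ) * τ + bilinC S (fun i => (p.2 i : ℂ)) z))) (φ τ z)

/-- The Fourier coefficients `f` are supported on indices of positive hyperbolic norm
(cusp form condition). -/
def IsCuspSupport {ι : Type*} [Fintype ι] (S : Matrix ι ι ℤ) (t : ℚ)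
    (f : ℚ × (ι → ℚ) → ℂ) : Prop :=
  ∀ p : ℚ × (ι → ℚ), f p ≠ 0 → 0 < 2 * p.1 * t - bilinQ S p.2 p.2

/-- `c` is a root of unity. -/
def HasFiniteOrder (c : ℂ) : Prop := ∃ N : ℕ, 0 < N ∧ c ^ N = 1

/-- The quadratic character mod 4. -/
def chi4 (n : ℤ) : ℂ := if n % 4 = 1 then 1 else if n % 4 = 3 then -1 else 0

/-- The classical Jacobi theta-series of characteristic `(1/2,1/2)`. -/
def jtheta (τ z : ℂ) : ℂ :=
  ∑' n : ℤ, chi4 n *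
    Complex.exp (2 * (π : ℂ) * I * (((n : ℂ) ^ 2 * τ) / 8 + (n : ℂ) * z / 2))

/-- The Dedekind eta function. -/
def dedekindEta (τ : ℂ) : ℂ :=
  Complex.exp ((π : ℂ) * I * τ / 12) *
    ∏' n : ℕ, (1 - Complex.exp (2 * (π : ℂ) * I * ((n : ℂ) + 1) * τ))

/-- Gram matrix `I_m + J_m` of the root lattice `A_m` (in the realization of the statement). -/
def AmGram (m : ℕ) : Matrix (Fin m) (Fin m) ℤ :=
  Matrix.of fun i j => if i = j then 2 else 1

/-- `θ_{A_m}(τ,z) = θ(τ,z₁)⋯θ(τ,z_m)·θ(τ,z₁+⋯+z_m)`. -/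
def thetaAm (m : ℕ) : ℂ → (Fin m → ℂ) → ℂ :=
  fun τ z => (∏ i, jtheta τ (z i)) * jtheta τ (∑ i, z i)

lemma AX_bilinC (m : ℕ) (x y : Fin m → ℂ) :
    bilinC (AmGram m) x y = ∑ i, x i * y i + (∑ i, x i) * ∑ i, y i := by
  unfold bilinC
  have h : ∀ i j : Fin m, x i * ((AmGram m i j : ℤ) : ℂ) * y j
      = (if i = j then x i * y j else 0) + x i * y j := by
    intro i j
    by_cases h : i = j
    · simp [AmGram, h]; ring
    · simp [AmGram, h]
  simp only [h, Finset.sum_add_distrib, Finset.sum_ite_eq, Finset.mem_univ, if_true]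
  rw [Finset.sum_mul_sum]

lemma AX_bilinQ (m : ℕ) (x y : Fin m → ℚ) :
    bilinQ (AmGram m) x y = ∑ i, x i * y i + (∑ i, x i) * ∑ i, y i := by
  unfold bilinQ
  have h : ∀ i j : Fin m, x i * ((AmGram m i j : ℤ) : ℚ) * y j
      = (if i = j then x i * y j else 0) + x i * y j := by
    intro i j
    by_cases h : i = j
    · simp [AmGram, h]; ring
    · simp [AmGram, h]
  simp only [h, Finset.sum_add_distrib, Finset.sum_ite_eq, Finset.mem_univ, if_true]
  rw [Finset.sum_mul_sum]

lemma AX_bilinZ (m : ℕ) (x y : Fin m → ℤ) :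
    bilinZ (AmGram m) x y = ∑ i, x i * y i + (∑ i, x i) * ∑ i, y i := by
  unfold bilinZ
  have h : ∀ i j : Fin m, x i * (AmGram m i j) * y j
      = (if i = j then x i * y j else 0) + x i * y j := by
    intro i j
    by_cases h : i = j
    · simp [AmGram, h]; ring
    · simp [AmGram, h]
  simp only [h, Finset.sum_add_distrib, Finset.sum_ite_eq, Finset.mem_univ, if_true]
  rw [Finset.sum_mul_sum]

def AX_term (τ z : ℂ) (n : ℤ) : ℂ := chi4 n *
    Complex.exp (2 * (π : ℂ) * I * (((n : ℂ) ^ 2 * τ) / 8 + (n : ℂ) * z / 2))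

lemma AX_chi4_even (k : ℤ) : chi4 (2 * k) = 0 := by
  unfold chi4
  rw [if_neg (by omega), if_neg (by omega)]

lemma AX_chi4_ne (n : ℤ) (h : chi4 n ≠ 0) : Odd n := by
  rcases Int.even_or_odd n with h1 | h1
  · obtain ⟨k, rfl⟩ := h1
    rw [← two_mul] at h
    exact absurd (AX_chi4_even k) h
  · exact h1

lemma AX_chi4_odd_ne (n : ℤ) (h : Odd n) : chi4 n ≠ 0 := by
  obtain ⟨k, rfl⟩ := h
  unfold chi4
  by_cases h : (2 * k + 1) % 4 = 1
  · simp [h]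
  · rw [if_neg h, if_pos (by omega)]; simp

lemma AX_chi4_add (n x : ℤ) : chi4 (n + 2 * x) = (-1) ^ x * chi4 n := by
  rcases Int.even_or_odd x with h1 | h1
  · rw [h1.neg_one_zpow]
    obtain ⟨k, rfl⟩ := h1
    unfold chi4
    have : (n + 2 * (k + k)) % 4 = n % 4 := by omega
    rw [this]; ring
  · rw [h1.neg_one_zpow]
    obtain ⟨k, rfl⟩ := h1
    unfold chi4
    have h4 : n % 4 = 0 ∨ n % 4 = 1 ∨ n % 4 = 2 ∨ n % 4 = 3 := by omega
    rcases h4 with h | h | h | h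
    · have : (n + 2 * (2 * k + 1)) % 4 = 2 := by omega
      simp [this, h]
    · have : (n + 2 * (2 * k + 1)) % 4 = 3 := by omega
      simp [this, h]
    · have : (n + 2 * (2 * k + 1)) % 4 = 0 := by omega
      simp [this, h]
    · have : (n + 2 * (2 * k + 1)) % 4 = 1 := by omega
      simp [this, h]

lemma AX_exp_pi_int (x : ℤ) : Complex.exp ((x : ℂ) * (π * I)) = (-1) ^ x := by
  rw [Complex.exp_int_mul, Complex.exp_pi_mul_I]

lemma AX_term_odd (τ z : ℂ) (k : ℤ) : AX_term τ z (2 * k + 1) =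
    Complex.exp (π * I * τ / 4 + π * I * z) * jacobiTheta₂_term k (z + τ / 2 + 1 / 2) τ := by
  unfold AX_term jacobiTheta₂_term
  have h1 : chi4 (2 * k + 1) = Complex.exp ((k : ℂ) * (π * I)) := by
    rw [AX_exp_pi_int, add_comm, AX_chi4_add]
    simp [chi4]
  rw [h1, ← Complex.exp_add, ← Complex.exp_add]
  congr 1
  push_cast
  ring

lemma AX_inj : Function.Injective (fun k : ℤ => 2 * k + 1) := by
  intro a b h
  simp only at h
  omega

lemma AX_supp : ∀ (τ z : ℂ) (n : ℤ), n ∉ Set.range (fun k : ℤ => 2 * k + 1) → AX_term τ z n = 0 := by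
  intro τ z n hn
  have : chi4 n = 0 := by
    by_contra h
    obtain ⟨k, hk⟩ := AX_chi4_ne n h
    exact hn ⟨k, hk.symm⟩
  simp [AX_term, this]

lemma AX_hasSum (τ z : ℂ) (hτ : 0 < τ.im) : HasSum (AX_term τ z)
    (Complex.exp (π * I * τ / 4 + π * I * z) * jacobiTheta₂ (z + τ / 2 + 1 / 2) τ) := by
  rw [← AX_inj.hasSum_iff (AX_supp τ z)]
  have := (hasSum_jacobiTheta₂_term (z + τ / 2 + 1 / 2) hτ).mul_left
    (Complex.exp (π * I * τ / 4 + π * I * z))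
  refine this.congr_fun ?_ |> fun h => h
  intro k
  exact AX_term_odd τ z k

lemma AX_jtheta_eq (τ z : ℂ) (hτ : 0 < τ.im) : jtheta τ z =
    Complex.exp (π * I * τ / 4 + π * I * z) * jacobiTheta₂ (z + τ / 2 + 1 / 2) τ :=
  (AX_hasSum τ z hτ).tsum_eq

lemma AX_hasSum' (τ z : ℂ) (hτ : 0 < τ.im) : HasSum (AX_term τ z) (jtheta τ z) := by
  rw [AX_jtheta_eq τ z hτ]; exact AX_hasSum τ z hτ

lemma AX_elliptic (τ z : ℂ) (x y : ℤ) : jtheta τ (z + x * τ + y) =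
    (-1) ^ x * (-1) ^ y * Complex.exp (-(π * I) * ((x : ℂ) ^ 2 * τ + 2 * x * z)) * jtheta τ z := by
  unfold jtheta
  rw [← tsum_mul_left, ← (Equiv.addRight (2 * x)).tsum_eq (fun n => _ * (chi4 n * _))]
  refine tsum_congr fun n => ?_
  simp only [Equiv.coe_addRight]
  rw [AX_chi4_add]
  by_cases hn : chi4 n = 0
  · simp [hn]
  obtain ⟨k, hk⟩ := AX_chi4_ne n hn
  have hy : ((-1 : ℂ)) ^ y = Complex.exp ((n * y : ℤ) * (π * I)) := by
    rw [AX_exp_pi_int, hk]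
    rw [show (2 * k + 1) * y = 2 * (k * y) + y by ring, zpow_add₀ (by norm_num), _root_.zpow_mul]
    norm_num
  have hx : ((-1 : ℂ)) ^ x * (-1) ^ x = 1 := by
    rw [← mul_zpow]; norm_num
  rw [hy]
  calc _ = chi4 n * Complex.exp ((n * y : ℤ) * (π * I) + (-(π * I) * ((x : ℂ) ^ 2 * τ + 2 * x * z)) +
      (2 * (π : ℂ) * I * ((((n + 2 * x : ℤ) : ℂ) ^ 2 * τ) / 8 + ((n + 2 * x : ℤ) : ℂ) * z / 2))) := by
        congr 2
        push_cast
        ring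
    _ = _ := by
        rw [Complex.exp_add, Complex.exp_add]
        linear_combination (-1) * chi4 n * Complex.exp ((n * y : ℤ) * (π * I)) * Complex.exp (-(π * I) * ((x : ℂ) ^ 2 * τ + 2 * x * z)) * Complex.exp (2 * (π : ℂ) * I * ((((n + 2 * x : ℤ) : ℂ) ^ 2 * τ) / 8 + ((n + 2 * x : ℤ) : ℂ) * z / 2)) * hx

lemma AX_diff (τ z : ℂ) (hτ : 0 < τ.im) :
    DifferentiableAt ℂ (fun p : ℂ × ℂ => jtheta p.1 p.2) (τ, z) := by
  have h1 : (fun p : ℂ × ℂ => jtheta p.1 p.2) =ᶠ[nhds (τ, z)] fun p =>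
      Complex.exp (π * I * p.1 / 4 + π * I * p.2) * jacobiTheta₂ (p.2 + p.1 / 2 + 1 / 2) p.1 := by
    have : {p : ℂ × ℂ | 0 < p.1.im} ∈ nhds (τ, z) :=
      (isOpen_lt continuous_const (Complex.continuous_im.comp continuous_fst)).mem_nhds hτ
    filter_upwards [this] with p hp
    exact AX_jtheta_eq _ _ hp
  refine DifferentiableAt.congr_of_eventuallyEq ?_ h1
  refine DifferentiableAt.mul (by fun_prop) ?_
  have h2 := (hasFDerivAt_jacobiTheta₂ (z + τ / 2 + 1 / 2) hτ).differentiableAt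
  exact DifferentiableAt.comp (τ, z) (g := fun p : ℂ × ℂ => jacobiTheta₂ p.1 p.2)
    (f := fun p : ℂ × ℂ => (p.2 + p.1 / 2 + 1 / 2, p.1)) h2 (by fun_prop)

lemma AX_holo (m : ℕ) :
    DifferentiableOn ℂ (fun p : ℂ × (Fin m → ℂ) => thetaAm m p.1 p.2) {p | 0 < p.1.im} := by
  intro p hp
  apply DifferentiableAt.differentiableWithinAt
  unfold thetaAm
  refine DifferentiableAt.mul ?_ ?_
  · refine (HasFDerivAt.finsetProd (g := fun i (p : ℂ × (Fin m → ℂ)) => jtheta p.1 (p.2 i))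
      (fun i _ => DifferentiableAt.hasFDerivAt (𝕜 := ℂ) ?_)).differentiableAt
    exact DifferentiableAt.comp p (g := fun p : ℂ × ℂ => jtheta p.1 p.2)
      (f := fun p : ℂ × (Fin m → ℂ) => (p.1, p.2 i)) (AX_diff _ _ hp) (by fun_prop)
  · exact DifferentiableAt.comp p (g := fun p : ℂ × ℂ => jtheta p.1 p.2)
      (f := fun p : ℂ × (Fin m → ℂ) => (p.1, ∑ i, p.2 i)) (AX_diff _ _ hp) (by fun_prop)

lemma AX_thetaElliptic (m : ℕ) (x y : Fin m → ℤ) (τ : ℂ) (z : Fin m → ℂ) :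
    thetaAm m τ (fun i => z i + (x i : ℂ) * τ + (y i : ℂ))
      = Complex.exp (-((π : ℂ) * I)
            * ((bilinZ (AmGram m) x x : ℂ) * τ + 2 * bilinC (AmGram m) (fun i => (x i : ℂ)) z))
        * thetaAm m τ z := by
  unfold thetaAm
  have h1 : ∑ i, (z i + (x i : ℂ) * τ + (y i : ℂ)) =
      (∑ i, z i) + ((∑ i, x i : ℤ) : ℂ) * τ + ((∑ i, y i : ℤ) : ℂ) := by
    push_cast
    rw [Finset.sum_add_distrib, Finset.sum_add_distrib, Finset.sum_mul]
  rw [h1, AX_elliptic]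
  simp only [AX_elliptic, Finset.prod_mul_distrib]
  rw [← Complex.exp_sum]
  have hs : ∀ w : Fin m → ℤ, (∏ i, (-1 : ℂ) ^ (w i)) * (-1) ^ (∑ i, w i) = 1 := by
    intro w
    have : ∏ i, (-1 : ℂ) ^ (w i) = (-1) ^ (∑ i, w i) := by
      induction (Finset.univ : Finset (Fin m)) using Finset.induction_on with
      | empty => simp
      | insert a s ha ih => rw [Finset.prod_insert ha, Finset.sum_insert ha, ih, zpow_add₀ (by norm_num)]
    rw [this, ← mul_zpow]; norm_num
  have he : Complex.exp (-((π : ℂ) * I)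
            * ((bilinZ (AmGram m) x x : ℂ) * τ + 2 * bilinC (AmGram m) (fun i => (x i : ℂ)) z))
      = Complex.exp (∑ i, -(π * I) * ((x i : ℂ) ^ 2 * τ + 2 * x i * z i)) *
        Complex.exp (-(π * I) * (((∑ i, x i : ℤ) : ℂ) ^ 2 * τ + 2 * ((∑ i, x i : ℤ) : ℂ) * ∑ i, z i)) := by
    rw [← Complex.exp_add, AX_bilinC, AX_bilinZ]
    congr 1
    rw [← Finset.mul_sum, Finset.sum_add_distrib, ← Finset.sum_mul]
    simp only [mul_assoc, ← Finset.mul_sum]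
    push_cast
    simp only [← pow_two]
    ring
  rw [he]
  have hx := hs x
  have hy := hs y
  set a := ∏ i, (-1 : ℂ) ^ (x i)
  set b := ∏ i, (-1 : ℂ) ^ (y i)
  set c := (-1 : ℂ) ^ (∑ i, x i)
  set d := (-1 : ℂ) ^ (∑ i, y i)
  have : a * b * c * d = 1 := by linear_combination b * d * hx + hy
  linear_combination (Complex.exp (∑ i, -(π * I) * ((x i : ℂ) ^ 2 * τ + 2 * x i * z i)) *
        Complex.exp (-(π * I) * (((∑ i, x i : ℤ) : ℂ) ^ 2 * τ + 2 * ((∑ i, x i : ℤ) : ℂ) * ∑ i, z i))) * (∏ i, jtheta τ (z i)) * jtheta τ (∑ i, z i) * this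

lemma AX_eta_eq (τ : ℂ) : dedekindEta τ = ModularForm.eta τ := by
  unfold dedekindEta ModularForm.eta
  congr 1
  · unfold Function.Periodic.qParam
    congr 1
    push_cast
    ring
  · refine tprod_congr fun n => ?_
    rw [ModularForm.eta_q_eq_cexp]

lemma AX_eta_ne (τ : ℂ) (hτ : 0 < τ.im) : dedekindEta τ ≠ 0 := by
  rw [AX_eta_eq]
  exact ModularForm.eta_ne_zero hτ

lemma AX_ne (τ : ℂ) (hτ : 0 < τ.im) : τ ≠ 0 := by
  rintro rfl; simp at hτ

lemma AX_sqrt (τ : ℂ) (hτ : 0 < τ.im) :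
    (I : ℂ) ^ (2⁻¹ : ℂ) * (-I * τ) ^ (1 / 2 : ℂ) = τ ^ (2⁻¹ : ℂ) := by
  have h0 : -I * τ ≠ 0 := mul_ne_zero (neg_ne_zero.mpr I_ne_zero) (AX_ne τ hτ)
  have hre : 0 < (-I * τ).re := by simpa using hτ
  have harg : |arg (-I * τ)| < π / 2 := Complex.abs_arg_lt_pi_div_two_iff.mpr (Or.inl hre)
  rw [abs_lt] at harg
  have hlog : log (I * (-I * τ)) = log I + log (-I * τ) := by
    apply Complex.log_mul I_ne_zero h0
    rw [Complex.arg_I]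
    constructor <;> linarith [Real.pi_pos]
  have h2 : I * (-I * τ) = τ := by
    linear_combination (-τ) * Complex.I_mul_I
  rw [h2] at hlog
  rw [Complex.cpow_def_of_ne_zero I_ne_zero, Complex.cpow_def_of_ne_zero h0,
    Complex.cpow_def_of_ne_zero (AX_ne τ hτ), hlog, ← Complex.exp_add]
  congr 1
  ring

lemma AX_eta_S (τ : ℂ) (hτ : 0 < τ.im) :
    dedekindEta (-1 / τ) = (-I * τ) ^ (1 / 2 : ℂ) * dedekindEta τ := by
  rw [AX_eta_eq, AX_eta_eq]
  have h := ModularForm.eta_comp_eq_csqrt_I_inv (show τ ∈ UpperHalfPlane.upperHalfPlaneSet from hτ)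
  simp only [Function.comp_apply, Pi.smul_apply, Pi.mul_apply, smul_eq_mul, Complex.sqrt] at h
  rw [h, ← AX_sqrt τ hτ]
  have : (I : ℂ) ^ (2⁻¹ : ℂ) ≠ 0 := by simp [Complex.cpow_eq_zero_iff]
  field_simp

lemma AX_eta_T (τ : ℂ) : dedekindEta (τ + 1) = Complex.exp (π * I / 12) * dedekindEta τ := by
  unfold dedekindEta
  rw [← mul_assoc, ← Complex.exp_add]
  congr 1
  · congr 1; ring
  · refine tprod_congr fun n => ?_
    congr 1
    rw [Complex.exp_eq_exp_iff_exists_int]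
    refine ⟨n + 1, ?_⟩
    push_cast
    ring

lemma AX_jtheta_T (τ z : ℂ) : jtheta (τ + 1) z = Complex.exp (π * I / 4) * jtheta τ z := by
  unfold jtheta
  rw [← tsum_mul_left]
  refine tsum_congr fun n => ?_
  by_cases hn : chi4 n = 0
  · simp [hn]
  obtain ⟨k, hk⟩ := AX_chi4_ne n hn
  obtain ⟨l, hl⟩ := Int.even_mul_succ_self k
  rw [mul_left_comm, ← Complex.exp_add]
  congr 1
  rw [Complex.exp_eq_exp_iff_exists_int]
  refine ⟨l, ?_⟩
  have hl' : (k : ℂ) * (k + 1) = l + l := by exact_mod_cast hl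
  have hk' : (n : ℂ) = 2 * k + 1 := by exact_mod_cast hk
  rw [hk']
  linear_combination (π * I) * hl'

lemma AX_jtheta_S (τ z : ℂ) (hτ : 0 < τ.im) : jtheta (-1 / τ) (z / τ) =
    -I * (-I * τ) ^ (1 / 2 : ℂ) * Complex.exp (π * I * z ^ 2 / τ) * jtheta τ z := by
  have h0 := AX_ne τ hτ
  have him : 0 < (-1 / τ).im := by
    rw [neg_div, neg_im, one_div, inv_im, neg_div, neg_neg]
    exact div_pos hτ (normSq_pos.mpr h0)
  have hw : (-I * τ) ^ (1 / 2 : ℂ) ≠ 0 := by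
    simp [Complex.cpow_eq_zero_iff, h0]
  rw [AX_jtheta_eq _ _ him, AX_jtheta_eq _ _ hτ]
  have hF := jacobiTheta₂_functional_equation (z + τ / 2 - 1 / 2) τ
  have h1 : jacobiTheta₂ (z + τ / 2 + 1 / 2) τ = jacobiTheta₂ (z + τ / 2 - 1 / 2) τ := by
    rw [← jacobiTheta₂_add_left (z + τ / 2 - 1 / 2)]; congr 1; ring
  have h2 : z / τ + -1 / τ / 2 + 1 / 2 = (z + τ / 2 - 1 / 2) / τ := by field_simp; ring
  rw [h1, hF, h2]
  have hI : -I = Complex.exp (-(π * I / 2)) := by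
    rw [Complex.exp_neg, show (π : ℂ) * I / 2 = π / 2 * I by ring, Complex.exp_pi_div_two_mul_I, Complex.inv_I]
  have hE : Complex.exp (π * I * (-1 / τ) / 4 + π * I * (z / τ)) =
     -I * Complex.exp (π * I * z ^ 2 / τ) * Complex.exp (π * I * τ / 4 + π * I * z) *
      Complex.exp (-π * I * (z + τ / 2 - 1 / 2) ^ 2 / τ) := by
    rw [hI, ← Complex.exp_add, ← Complex.exp_add, ← Complex.exp_add]
    congr 1
    field_simp
    ring
  rw [hE]
  field_simp

def AX_j (A : SL2Z) (τ : ℂ) : ℂ := (A.1 1 0 : ℂ) * τ + (A.1 1 1 : ℂ)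
def AX_mob (A : SL2Z) (τ : ℂ) : ℂ := ((A.1 0 0 : ℂ) * τ + (A.1 0 1 : ℂ)) / AX_j A τ

lemma AX_mob_coe (A : SL2Z) (τ : UpperHalfPlane) : AX_mob A τ = ((A • τ : UpperHalfPlane) : ℂ) := by
  rw [UpperHalfPlane.coe_specialLinearGroup_apply]
  simp [AX_mob, AX_j]

lemma AX_mob_im (A : SL2Z) (τ : ℂ) (hτ : 0 < τ.im) : 0 < (AX_mob A τ).im := by
  have := AX_mob_coe A ⟨τ, hτ⟩
  exact this ▸ UpperHalfPlane.im_pos _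

lemma AX_mob_mul (A B : SL2Z) (τ : ℂ) (hτ : 0 < τ.im) :
    AX_mob (A * B) τ = AX_mob A (AX_mob B τ) := by
  have h1 := AX_mob_coe (A * B) ⟨τ, hτ⟩
  have h2 := AX_mob_coe B ⟨τ, hτ⟩
  have h3 := AX_mob_coe A (B • ⟨τ, hτ⟩)
  rw [← h2] at h3
  rw [mul_smul, ← h3] at h1
  exact h1

lemma AX_det (A : SL2Z) : (A.1 0 0 : ℂ) * A.1 1 1 - A.1 0 1 * A.1 1 0 = 1 := by
  have := A.2
  rw [Matrix.det_fin_two] at this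
  exact_mod_cast this

lemma AX_j_ne (A : SL2Z) (τ : ℂ) (hτ : 0 < τ.im) : AX_j A τ ≠ 0 := by
  intro h
  have h1 := AX_mob_im A τ hτ
  rw [AX_mob, h] at h1
  simp at h1

lemma AX_j_mul (A B : SL2Z) (τ : ℂ) (hτ : 0 < τ.im) :
    AX_j (A * B) τ = AX_j A (AX_mob B τ) * AX_j B τ := by
  have hB := AX_j_ne B τ hτ
  rw [AX_j, AX_j, AX_mob]
  rw [add_mul, mul_assoc, div_mul_cancel₀ _ hB]
  simp only [Matrix.SpecialLinearGroup.coe_mul, Matrix.mul_apply, Fin.sum_univ_two, AX_j]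
  push_cast
  ring

lemma AX_c_mul (A B : SL2Z) (τ : ℂ) (hτ : 0 < τ.im) :
    ((A * B).1 1 0 : ℂ) / AX_j (A * B) τ =
      (A.1 1 0 : ℂ) / (AX_j A (AX_mob B τ) * AX_j B τ ^ 2) + (B.1 1 0 : ℂ) / AX_j B τ := by
  have hB := AX_j_ne B τ hτ
  have hA := AX_j_ne A _ (AX_mob_im B τ hτ)
  have hj := AX_j_mul A B τ hτ
  have hd := AX_det B
  have key : ((A * B).1 1 0 : ℂ) * AX_j B τ = A.1 1 0 + B.1 1 0 * AX_j (A * B) τ := by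
    simp only [Matrix.SpecialLinearGroup.coe_mul, Matrix.mul_apply, Fin.sum_univ_two, AX_j]
    push_cast
    linear_combination (A.1 1 0 : ℂ) * hd
  rw [hj] at key ⊢
  field_simp
  linear_combination key

def AX_M (A : SL2Z) : Prop := ∀ τ : ℂ, 0 < τ.im → ∀ z : ℂ,
  jtheta (AX_mob A τ) (z / AX_j A τ) * (dedekindEta τ ^ 3 * AX_j A τ) =
    dedekindEta (AX_mob A τ) ^ 3 * Complex.exp (π * I * z ^ 2 * ((A.1 1 0 : ℂ) / AX_j A τ)) * jtheta τ z

lemma AX_M_mul (A B : SL2Z) (hA : AX_M A) (hB : AX_M B) : AX_M (A * B) := by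
  intro τ hτ z
  have hBi := AX_mob_im B τ hτ
  have h1 := hB τ hτ z
  have h2 := hA _ hBi (z / AX_j B τ)
  have he := AX_eta_ne _ hBi
  have hjB := AX_j_ne B τ hτ
  have hjA := AX_j_ne A _ hBi
  rw [AX_c_mul A B τ hτ, AX_mob_mul A B τ hτ, AX_j_mul A B τ hτ, mul_add, Complex.exp_add]
  rw [div_div, mul_comm (AX_j B τ)] at h2
  have hx : (π : ℂ) * I * (z / AX_j B τ) ^ 2 * ((A.1 1 0 : ℂ) / AX_j A (AX_mob B τ)) =
      π * I * z ^ 2 * ((A.1 1 0 : ℂ) / (AX_j A (AX_mob B τ) * AX_j B τ ^ 2)) := by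
    field_simp
  rw [hx] at h2
  apply mul_right_cancel₀ (pow_ne_zero 3 he)
  linear_combination (dedekindEta τ ^ 3 * AX_j B τ) * h2 + dedekindEta (AX_mob A (AX_mob B τ)) ^ 3 *
    Complex.exp (π * I * z ^ 2 * ((A.1 1 0 : ℂ) / (AX_j A (AX_mob B τ) * AX_j B τ ^ 2))) * h1

lemma AX_j_one (τ : ℂ) : AX_j 1 τ = 1 := by simp [AX_j]
lemma AX_mob_one (τ : ℂ) : AX_mob 1 τ = τ := by simp [AX_mob, AX_j]

lemma AX_M_one : AX_M 1 := by
  intro τ hτ z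
  simp [AX_j_one, AX_mob_one]
  ring

lemma AX_M_inv (A : SL2Z) (hA : AX_M A) : AX_M A⁻¹ := by
  intro τ hτ z
  have hBi := AX_mob_im A⁻¹ τ hτ
  have hm := AX_mob_mul A A⁻¹ τ hτ
  have hj := AX_j_mul A A⁻¹ τ hτ
  have hc := AX_c_mul A A⁻¹ τ hτ
  rw [mul_inv_cancel, AX_j_one] at hj
  rw [mul_inv_cancel, AX_mob_one] at hm
  rw [mul_inv_cancel, AX_j_one, ← mul_one (AX_j A (AX_mob A⁻¹ τ))] at hc
  have h2 := hA _ hBi (z / AX_j A⁻¹ τ)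
  have hjB := AX_j_ne A⁻¹ τ hτ
  have hjA := AX_j_ne A _ hBi
  rw [div_div, mul_comm (AX_j A⁻¹ τ), ← hj, div_one, ← hm] at h2
  have hx : Complex.exp ((π : ℂ) * I * (z / AX_j A⁻¹ τ) ^ 2 * ((A.1 1 0 : ℂ) / AX_j A (AX_mob A⁻¹ τ))) *
      Complex.exp (π * I * z ^ 2 * ((A⁻¹.1 1 0 : ℂ) / AX_j A⁻¹ τ)) = 1 := by
    rw [← Complex.exp_add, Complex.exp_eq_one_iff]
    refine ⟨0, ?_⟩
    have : ((1 : SL2Z).1 1 0 : ℂ) = 0 := by simp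
    rw [this, zero_div] at hc
    have h3 : (π : ℂ) * I * (z / AX_j A⁻¹ τ) ^ 2 * ((A.1 1 0 : ℂ) / AX_j A (AX_mob A⁻¹ τ)) =
      π * I * z ^ 2 * ((A.1 1 0 : ℂ) / (AX_j A (AX_mob A⁻¹ τ) * 1 * AX_j A⁻¹ τ ^ 2)) := by
      field_simp
    rw [h3]
    linear_combination (-(π * I * z ^ 2)) * hc
  linear_combination (- AX_j A⁻¹ τ * Complex.exp (π * I * z ^ 2 * ((A⁻¹.1 1 0 : ℂ) / AX_j A⁻¹ τ))) * h2
    + (- jtheta (AX_mob A⁻¹ τ) (z / AX_j A⁻¹ τ) * dedekindEta τ ^ 3 * AX_j A⁻¹ τ) * hx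
    - jtheta τ z * dedekindEta (AX_mob A⁻¹ τ) ^ 3 * Complex.exp (π * I * z ^ 2 * ((A⁻¹.1 1 0 : ℂ) / AX_j A⁻¹ τ)) * hj

lemma AX_M_S : AX_M ModularGroup.S := by
  intro τ hτ z
  have h1 : AX_j ModularGroup.S τ = τ := by simp [AX_j, ModularGroup.S]
  have h2 : AX_mob ModularGroup.S τ = -1 / τ := by rw [AX_mob, h1]; simp [ModularGroup.S]
  have h3 : (ModularGroup.S.1 1 0 : ℂ) = 1 := by simp [ModularGroup.S]
  rw [h1, h2, h3, AX_jtheta_S τ z hτ, AX_eta_S τ hτ]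
  have hw : (-I * τ) ^ (1 / 2 : ℂ) * (-I * τ) ^ (1 / 2 : ℂ) = -I * τ := by
    rw [← Complex.cpow_add _ _ (mul_ne_zero (neg_ne_zero.mpr I_ne_zero) (AX_ne τ hτ))]
    norm_num
  rw [mul_one_div]
  linear_combination (-(-I * τ) ^ (1 / 2 : ℂ) * Complex.exp (π * I * z ^ 2 / τ) * jtheta τ z * dedekindEta τ ^ 3) * hw

lemma AX_M_T : AX_M ModularGroup.T := by
  intro τ hτ z
  have h1 : AX_j ModularGroup.T τ = 1 := by simp [AX_j, ModularGroup.T]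
  have h2 : AX_mob ModularGroup.T τ = τ + 1 := by rw [AX_mob, h1]; simp [ModularGroup.T]
  have h3 : (ModularGroup.T.1 1 0 : ℂ) = 0 := by simp [ModularGroup.T]
  rw [h1, h2, h3, AX_jtheta_T, AX_eta_T, mul_pow, ← Complex.exp_nat_mul]
  rw [show ((3 : ℕ) : ℂ) * (π * I / 12) = π * I / 4 by push_cast; ring]
  simp
  ring

lemma AX_M_all (A : SL2Z) : AX_M A := by
  have : A ∈ Subgroup.closure {ModularGroup.S, ModularGroup.T} := by
    simp [SpecialLinearGroup.SL2Z_generators]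
  induction this using Subgroup.closure_induction with
  | one => exact AX_M_one
  | mem g hg =>
    rcases hg with rfl | rfl
    · exact AX_M_S
    · exact AX_M_T
  | mul a b _ _ ha hb => exact AX_M_mul a b ha hb
  | inv a _ ha => exact AX_M_inv a ha

lemma AX_modular (m : ℕ) (A : SL2Z) (v : ℂ) (τ : ℂ) (hτ : 0 < τ.im) (z : Fin m → ℂ)
    (hv : dedekindEta (AX_mob A τ) ^ (3 * m + 3) = v * AX_j A τ ^ (((3 * m + 3 : ℕ) : ℂ) / 2)
          * dedekindEta τ ^ (3 * m + 3)) :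
    thetaAm m (AX_mob A τ) (fun i => z i / AX_j A τ) =
      v * AX_j A τ ^ (((((m : ℚ) + 1) / 2 : ℚ)) : ℂ)
        * Complex.exp ((π : ℂ) * I * ((1 : ℚ) : ℂ) * (A.1 1 0 : ℂ) * bilinC (AmGram m) z z / AX_j A τ)
        * thetaAm m τ z := by
  have hj := AX_j_ne A τ hτ
  have he := AX_eta_ne τ hτ
  have hM := AX_M_all A τ hτ
  have hP : (∏ i, jtheta (AX_mob A τ) (z i / AX_j A τ)) * (dedekindEta τ ^ 3 * AX_j A τ) ^ m =
      (dedekindEta (AX_mob A τ) ^ 3) ^ m *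
        Complex.exp (∑ i, π * I * (z i) ^ 2 * ((A.1 1 0 : ℂ) / AX_j A τ)) * ∏ i, jtheta τ (z i) := by
    have := Finset.prod_congr rfl (fun (i : Fin m) (_ : i ∈ Finset.univ) => hM (z i))
    simp only [Finset.prod_mul_distrib, Finset.prod_const, Finset.card_univ, Fintype.card_fin,
      ← Complex.exp_sum] at this
    rw [← this]; ring
  have hQ := hM (∑ i, z i)
  have hE : Complex.exp ((π : ℂ) * I * ((1 : ℚ) : ℂ) * (A.1 1 0 : ℂ) * bilinC (AmGram m) z z / AX_j A τ) =
      Complex.exp (∑ i, π * I * (z i) ^ 2 * ((A.1 1 0 : ℂ) / AX_j A τ)) *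
      Complex.exp (π * I * (∑ i, z i) ^ 2 * ((A.1 1 0 : ℂ) / AX_j A τ)) := by
    rw [← Complex.exp_add, AX_bilinC, ← Finset.sum_mul, ← Finset.mul_sum]
    congr 1
    simp only [← pow_two]
    push_cast
    ring
  have hpw : AX_j A τ ^ (((3 * m + 3 : ℕ) : ℂ) / 2) =
      AX_j A τ ^ (((((m : ℚ) + 1) / 2 : ℚ)) : ℂ) * AX_j A τ ^ (m + 1) := by
    rw [← Complex.cpow_natCast, ← Complex.cpow_add _ _ hj]
    congr 1
    push_cast
    ring
  rw [hpw] at hv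
  have hs : ∑ i, z i / AX_j A τ = (∑ i, z i) / AX_j A τ := by rw [Finset.sum_div]
  unfold thetaAm
  rw [hs, hE]
  apply mul_right_cancel₀ (pow_ne_zero (m + 1) (mul_ne_zero (pow_ne_zero 3 he) hj))
  calc _ = ((∏ i, jtheta (AX_mob A τ) (z i / AX_j A τ)) * (dedekindEta τ ^ 3 * AX_j A τ) ^ m) *
        (jtheta (AX_mob A τ) ((∑ i, z i) / AX_j A τ) * (dedekindEta τ ^ 3 * AX_j A τ)) := by ring
    _ = dedekindEta (AX_mob A τ) ^ (3 * m + 3) * (Complex.exp (∑ i, π * I * (z i) ^ 2 * ((A.1 1 0 : ℂ) / AX_j A τ)) *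
      Complex.exp (π * I * (∑ i, z i) ^ 2 * ((A.1 1 0 : ℂ) / AX_j A τ)) *
        ((∏ i, jtheta τ (z i)) * jtheta τ (∑ i, z i))) := by rw [hP, hQ]; ring
    _ = _ := by rw [hv]; ring

lemma AX_mulsum {α β : Type} (f : α → ℂ) (g : β → ℂ) (s t : ℂ) (hf : HasSum f s) (hg : HasSum g t) :
    HasSum (fun x : α × β => f x.1 * g x.2) (s * t) := by
  have h1 : Summable (fun x => ‖f x‖) := hf.summable.norm
  have h2 : Summable (fun x => ‖g x‖) := hg.summable.norm
  exact hf.mul hg (summable_mul_of_summable_norm h1 h2)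

lemma AX_pi_sum (m : ℕ) (f : Fin m → ℤ → ℂ) (s : Fin m → ℂ) (hf : ∀ i, HasSum (f i) (s i)) :
    HasSum (fun n : Fin m → ℤ => ∏ i, f i (n i)) (∏ i, s i) := by
  induction m with
  | zero =>
    simp only [Finset.univ_eq_empty, Finset.prod_empty]
    convert hasSum_unique (fun _ : Fin 0 → ℤ => (1 : ℂ))
  | succ m ih =>
    have h1 := ih (fun i => f i.succ) (fun i => s i.succ) (fun i => hf i.succ)
    have h0 := hf 0
    have h2 := AX_mulsum _ _ _ _ h0 h1
    rw [← (Fin.consEquiv (fun _ : Fin (m + 1) => ℤ)).hasSum_iff]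
    simp only [Fin.prod_univ_succ]
    refine h2.congr_fun ?_ |> fun h => h
    rintro ⟨a, b⟩
    simp [Fin.consEquiv]

abbrev AX_idx (m : ℕ) := (Fin m → ℤ) × ℤ

def AX_coef (m : ℕ) (a : AX_idx m) : ℂ := (∏ i, chi4 (a.1 i)) * chi4 a.2

def AX_D (m : ℕ) (a : AX_idx m) : ℤ := a.2 - ∑ i, a.1 i

def AX_proj (m : ℕ) (a : AX_idx m) : ℚ × (Fin m → ℚ) :=
  ((∑ i, (a.1 i : ℚ) ^ 2 + (a.2 : ℚ) ^ 2) / 8,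
    fun i => (a.1 i : ℚ) / 2 + (AX_D m a : ℚ) / (2 * ((m : ℚ) + 1)))

def AX_g (m : ℕ) (p : ℚ × (Fin m → ℚ)) : ℂ := ∑' a : AX_proj m ⁻¹' {p}, AX_coef m a

lemma AX_m1 (m : ℕ) : (m : ℚ) + 1 ≠ 0 := by positivity

lemma AX_sum_l (m : ℕ) (a : AX_idx m) :
    ∑ i, (AX_proj m a).2 i = (a.2 : ℚ) / 2 - (AX_D m a : ℚ) / (2 * ((m : ℚ) + 1)) := by
  have := AX_m1 m
  simp only [AX_proj, Finset.sum_add_distrib, Finset.sum_const, Finset.card_univ, Fintype.card_fin,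
    ← Finset.sum_div, nsmul_eq_mul]
  have hD : (AX_D m a : ℚ) = a.2 - ∑ i, (a.1 i : ℚ) := by simp [AX_D]
  rw [show ∑ i, (a.1 i : ℚ) = a.2 - AX_D m a by rw [hD]; ring]
  field_simp
  ring

lemma AX_norm (m : ℕ) (a : AX_idx m) :
    2 * (AX_proj m a).1 - bilinQ (AmGram m) (AX_proj m a).2 (AX_proj m a).2 =
      (AX_D m a : ℚ) ^ 2 / (4 * ((m : ℚ) + 1)) := by
  have := AX_m1 m
  rw [AX_bilinQ, AX_sum_l]
  have hD : (AX_D m a : ℚ) = a.2 - ∑ i, (a.1 i : ℚ) := by simp [AX_D]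
  have h1 : ∑ i, (AX_proj m a).2 i * (AX_proj m a).2 i =
      (∑ i, (a.1 i : ℚ) ^ 2) / 4 + (∑ i, (a.1 i : ℚ)) * ((AX_D m a : ℚ) / (2 * ((m : ℚ) + 1)))
        + m * ((AX_D m a : ℚ) / (2 * ((m : ℚ) + 1))) ^ 2 := by
    have : ∀ i, (AX_proj m a).2 i * (AX_proj m a).2 i = (a.1 i : ℚ) ^ 2 / 4 +
        (a.1 i : ℚ) * ((AX_D m a : ℚ) / (2 * ((m : ℚ) + 1))) + ((AX_D m a : ℚ) / (2 * ((m : ℚ) + 1))) ^ 2 := by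
      intro i; simp only [AX_proj]; ring
    simp only [this, Finset.sum_add_distrib, Finset.sum_const, Finset.card_univ, Fintype.card_fin,
      ← Finset.sum_div, ← Finset.sum_mul, nsmul_eq_mul]
  rw [h1, show ∑ i, (a.1 i : ℚ) = a.2 - AX_D m a by rw [hD]; ring]
  simp only [AX_proj]
  field_simp
  ring

lemma AX_term_eq (m : ℕ) (τ : ℂ) (z : Fin m → ℂ) (a : AX_idx m) :
    (∏ i, AX_term τ (z i) (a.1 i)) * AX_term τ (∑ i, z i) a.2 =
      AX_coef m a * Complex.exp (2 * (π : ℂ) * I *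
          (((AX_proj m a).1 : ℂ) * τ + bilinC (AmGram m) (fun i => ((AX_proj m a).2 i : ℂ)) z)) := by
  simp only [AX_term, Finset.prod_mul_distrib, ← Complex.exp_sum, AX_coef]
  have : Complex.exp (2 * (π : ℂ) * I *
          (((AX_proj m a).1 : ℂ) * τ + bilinC (AmGram m) (fun i => ((AX_proj m a).2 i : ℂ)) z)) =
      Complex.exp (∑ i, 2 * (π : ℂ) * I * (((a.1 i : ℂ) ^ 2 * τ) / 8 + (a.1 i : ℂ) * z i / 2)) *
      Complex.exp (2 * (π : ℂ) * I * (((a.2 : ℂ) ^ 2 * τ) / 8 + (a.2 : ℂ) * (∑ i, z i) / 2)) := by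
    rw [← Complex.exp_add, AX_bilinC]
    congr 1
    have h1 : ∑ i, ((AX_proj m a).2 i : ℂ) = (a.2 : ℂ) / 2 - (AX_D m a : ℂ) / (2 * ((m : ℂ) + 1)) := by
      have := congrArg (fun q : ℚ => (q : ℂ)) (AX_sum_l m a)
      push_cast at this
      exact this
    have h2 : ∑ i, ((AX_proj m a).2 i : ℂ) * z i = (∑ i, (a.1 i : ℂ) * z i) / 2 +
        (AX_D m a : ℂ) / (2 * ((m : ℂ) + 1)) * ∑ i, z i := by
      rw [Finset.sum_div, Finset.mul_sum, ← Finset.sum_add_distrib]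
      refine Finset.sum_congr rfl fun i _ => ?_
      simp only [AX_proj]
      push_cast
      ring
    have h3 : ((AX_proj m a).1 : ℂ) = (∑ i, (a.1 i : ℂ) ^ 2 + (a.2 : ℂ) ^ 2) / 8 := by
      simp only [AX_proj]
      push_cast
      ring
    rw [h1, h2, h3, ← Finset.mul_sum, Finset.sum_add_distrib, ← Finset.sum_div, ← Finset.sum_div,
      ← Finset.sum_mul]
    ring
  rw [this]
  ring

lemma AX_fiber {α γ : Type} (F : α → ℂ) (e : γ → ℂ) (s : ℂ) (P : α → γ) (C : α → ℂ) (G : γ → ℂ)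
    (h : HasSum F s) (hF : ∀ a, F a = C a * e (P a))
    (hG : ∀ p, G p = ∑' a : P ⁻¹' {p}, C a) :
    HasSum (fun p => G p * e p) s := by
  have h3 := h.tsum_fiberwise P
  have : (fun p => G p * e p) = fun p => ∑' a : P ⁻¹' {p}, F a := by
    funext p
    rw [hG, ← tsum_mul_right]
    refine tsum_congr fun a => ?_
    have h4 : P a.1 = p := a.2
    rw [hF, h4]
  rw [this]
  exact h3

lemma AX_expansion (m : ℕ) (τ : ℂ) (hτ : 0 < τ.im) (z : Fin m → ℂ) :
    HasSum (fun p : ℚ × (Fin m → ℚ) =>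
        AX_g m p * Complex.exp (2 * (π : ℂ) * I *
          ((p.1 : ℂ) * τ + bilinC (AmGram m) (fun i => (p.2 i : ℂ)) z))) (thetaAm m τ z) := by
  have h1 : HasSum (fun n : Fin m → ℤ => ∏ i, AX_term τ (z i) (n i)) (∏ i, jtheta τ (z i)) :=
    AX_pi_sum m (fun i => AX_term τ (z i)) (fun i => jtheta τ (z i))
      (fun i => AX_hasSum' τ (z i) hτ)
  have h0 := AX_hasSum' τ (∑ i, z i) hτ
  have h2 := AX_mulsum (fun n : Fin m → ℤ => ∏ i, AX_term τ (z i) (n i))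
    (AX_term τ (∑ i, z i)) (∏ i, jtheta τ (z i)) (jtheta τ (∑ i, z i)) h1 h0
  rw [show thetaAm m τ z = (∏ i, jtheta τ (z i)) * jtheta τ (∑ i, z i) from rfl]
  exact AX_fiber _ (fun p : ℚ × (Fin m → ℚ) => Complex.exp (2 * (π : ℂ) * I *
          ((p.1 : ℂ) * τ + bilinC (AmGram m) (fun i => (p.2 i : ℂ)) z)))
    _ (AX_proj m) (AX_coef m) (AX_g m) h2 (AX_term_eq m τ z) (fun _ => rfl)

lemma AX_g_ne (m : ℕ) (p) (h : AX_g m p ≠ 0) : ∃ a, AX_proj m a = p ∧ AX_coef m a ≠ 0 := by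
  by_contra hc
  push Not at hc
  apply h
  rw [AX_g]
  convert tsum_zero with a
  exact hc a.1 a.2

lemma AX_odd (m : ℕ) (hm : Even m) (a : AX_idx m) (h : AX_coef m a ≠ 0) : Odd (AX_D m a) := by
  rw [AX_coef, mul_ne_zero_iff, Finset.prod_ne_zero_iff] at h
  have h2 := AX_chi4_ne _ h.2
  have h1 : Even (∑ i, a.1 i) := by
    have : ∀ i, ∃ k, a.1 i = 2 * k + 1 := fun i => AX_chi4_ne _ (h.1 i (Finset.mem_univ i))
    choose k hk using this
    simp only [hk, Finset.sum_add_distrib, ← Finset.mul_sum, Finset.sum_const, Finset.card_univ,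
      Fintype.card_fin]
    obtain ⟨r, hr⟩ := hm
    refine ⟨∑ i, k i + r, ?_⟩
    have hr' : (m : ℤ) = r + r := by exact_mod_cast hr
    rw [nsmul_eq_mul, hr']
    ring
  exact h2.sub_even h1

lemma AX_halfdual (m : ℕ) (a : AX_idx m) : InHalfDual (AmGram m) (AX_proj m a).2 := by
  intro x
  refine ⟨∑ i, a.1 i * x i + a.2 * ∑ i, x i, ?_⟩
  rw [AX_bilinQ, AX_sum_l]
  have h2 : ∑ i, ((AX_proj m a).2 i) * (x i : ℚ) = (∑ i, (a.1 i : ℚ) * x i) / 2 +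
        (AX_D m a : ℚ) / (2 * ((m : ℚ) + 1)) * ∑ i, (x i : ℚ) := by
    rw [Finset.sum_div, Finset.mul_sum, ← Finset.sum_add_distrib]
    refine Finset.sum_congr rfl fun i _ => ?_
    simp only [AX_proj]
    ring
  rw [h2]
  push_cast
  ring

lemma AX_lower (m : ℕ) (hm : Even m) (p) (h : AX_g m p ≠ 0) :
    1 / (4 * ((m : ℚ) + 1)) ≤ 2 * p.1 - bilinQ (AmGram m) p.2 p.2 := by
  obtain ⟨a, rfl, ha⟩ := AX_g_ne m p h
  rw [AX_norm]
  have hD := AX_odd m hm a ha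
  have h1 : (1 : ℤ) ≤ AX_D m a ^ 2 := by
    have : AX_D m a ≠ 0 := by
      intro h0; rw [h0] at hD; simp at hD
    have := pow_pos (abs_pos.mpr this) 2
    rw [sq_abs] at this
    omega
  have h2 : (1 : ℚ) ≤ (AX_D m a : ℚ) ^ 2 := by exact_mod_cast h1
  gcongr

lemma AX_exists (m : ℕ) (hm : 2 ≤ m) (hme : Even m) : ∃ p, AX_g m p ≠ 0 ∧
        2 * p.1 - bilinQ (AmGram m) p.2 p.2 = 1 / (4 * ((m : ℚ) + 1)) := by
  have hm1 := AX_m1 m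
  have hp : (0 : ℚ) < (m : ℚ) + 1 := by positivity
  set a₀ : AX_idx m := (fun _ => 1, (m : ℤ) - 1) with ha₀
  have hD0 : AX_D m a₀ = -1 := by simp [AX_D, ha₀]
  refine ⟨AX_proj m a₀, ?_, ?_⟩
  · have huniq : ∀ a, AX_proj m a = AX_proj m a₀ → a = a₀ := by
      intro a ha
      have hn := AX_norm m a
      rw [ha, AX_norm m a₀, hD0] at hn
      have hsq : (AX_D m a) ^ 2 = 1 := by
        have : (AX_D m a : ℚ) ^ 2 = 1 := by
          field_simp at hn
          push_cast at hn
          linarith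
        exact_mod_cast this
      have hi : ∀ i, (a.1 i - 1) * ((m : ℤ) + 1) = - 1 - AX_D m a := by
        intro i
        have := congrFun (congrArg Prod.snd ha) i
        simp only [AX_proj, hD0] at this
        have h3 : ((a.1 i : ℚ) - 1) * ((m : ℚ) + 1) = - 1 - AX_D m a := by
          simp only [ha₀] at this
          field_simp at this
          push_cast at this
          linarith
        exact_mod_cast h3
      have hD : AX_D m a = -1 := by
        rcases sq_eq_one_iff.mp hsq with h | h
        · exfalso
          have h4 := hi ⟨0, by omega⟩
          rw [h] at h4
          have : ((m : ℤ) + 1) ∣ 2 := ⟨-(a.1 ⟨0, by omega⟩ - 1), by linarith⟩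
          have := Int.le_of_dvd (by norm_num) this
          omega
        · exact h
      have h1 : a.1 = fun _ => 1 := by
        funext i
        have h4 := hi i
        rw [hD] at h4
        have : a.1 i - 1 = 0 := by
          have h5 : (m : ℤ) + 1 ≠ 0 := by omega
          simpa [h5] using h4
        linarith
      have h2 : a.2 = (m : ℤ) - 1 := by
        have h6 := hD
        simp only [AX_D, h1] at h6
        simp at h6
        linarith
      exact Prod.ext h1 h2
    have hg : AX_g m (AX_proj m a₀) = AX_coef m a₀ := by
      rw [AX_g, tsum_eq_single (⟨a₀, rfl⟩ : AX_proj m ⁻¹' {AX_proj m a₀})]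
      intro b hb
      exact absurd (Subtype.ext (huniq b.1 b.2)) hb
    rw [hg, AX_coef, mul_ne_zero_iff, Finset.prod_ne_zero_iff]
    refine ⟨fun i _ => AX_chi4_odd_ne _ (by simp [ha₀]), AX_chi4_odd_ne _ ?_⟩
    obtain ⟨r, hr⟩ := hme
    exact ⟨(r : ℤ) - 1, by simp only [ha₀, hr]; push_cast; ring⟩
  · rw [AX_norm, hD0]; norm_num

/-- For even `m ≥ 2`, the theta-product `θ_{A_m}` is a holomorphic Jacobi
form of weight `(m+1)/2` and index `1` for the lattice `A_m` (Gram matrix `I_m+J_m`) with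
multiplier system `v_η^{3m+3}`, and it is a cusp form of critical weight of order exactly
`1/(4(m+1))`. -/
theorem statement14 (m : ℕ) (hm : 2 ≤ m) (hmeven : Even m)
    (vη : SL2Z → ℂ)
    (hvη : ∀ A : SL2Z, ∀ τ : ℂ, 0 < τ.im →
      dedekindEta (((A.1 0 0 : ℂ) * τ + (A.1 0 1 : ℂ))
            / ((A.1 1 0 : ℂ) * τ + (A.1 1 1 : ℂ))) ^ (3 * m + 3)
        = vη A * ((A.1 1 0 : ℂ) * τ + (A.1 1 1 : ℂ)) ^ (((3 * m + 3 : ℕ) : ℂ) / 2)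
          * dedekindEta τ ^ (3 * m + 3)) :
    ∃ g : ℚ × (Fin m → ℚ) → ℂ,
      IsJacobiForm (AmGram m) (((m : ℚ) + 1) / 2) 1 vη (fun _ _ => 1) g (thetaAm m) ∧
      (∀ p, g p ≠ 0 →
        1 / (4 * ((m : ℚ) + 1)) ≤ 2 * p.1 - bilinQ (AmGram m) p.2 p.2) ∧
      (∃ p, g p ≠ 0 ∧
        2 * p.1 - bilinQ (AmGram m) p.2 p.2 = 1 / (4 * ((m : ℚ) + 1))) := by
  refine ⟨AX_g m, ⟨AX_holo m, ?_, ?_, ?_, ?_⟩, AX_lower m hmeven, AX_exists m hm hmeven⟩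
  · intro A τ hτ z
    exact AX_modular m A (vη A) τ hτ z (hvη A τ hτ)
  · intro x y τ hτ z
    have := AX_thetaElliptic m x y τ z
    simpa using this
  · intro p hp
    have h1 := AX_lower m hmeven p hp
    obtain ⟨a, rfl, ha⟩ := AX_g_ne m p hp
    refine ⟨?_, AX_halfdual m a, ?_⟩
    · simp only [AX_proj]; positivity
    · rw [mul_one]
      exact le_trans (by positivity) h1
  · intro τ hτ z
    exact AX_expansion m τ hτ z
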